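/- Let γ > 1 and let T be the Pikovsky map with parameter γ. There exists a constant C_γ > 0 depending only on γ such that for every n ≥ 1, every admissible tuple (ℓ₀,…,ℓ_p), and every integer 0 ≤ ℓ < n, λ(T^ℓ(C_n(ℓ₀,…,ℓ_p))) ≤ C_γ (n−ℓ)^{−γ/(γ−1)}. -/

import Mathlib

set_option autoImplicit false

open MeasureTheory Filter
open scoped ENNReal NNReal Topology

noncomputable section

/-- `T` is the Pikovsky map on `[-1,1]` with parameter `γ`: implicitly defined by
`x = (1+T(x))^γ/(2γ)` on `(0, 1/(2γ)]`, `x = T(x) + (1−T(x))^γ/(2γ)` on `[1/(2γ), 1]`, and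
the odd symmetry `T(x) = −T(−x)` on `[-1, 0)`. -/
def IsPikovsky (γ : ℝ) (T : ℝ → ℝ) : Prop :=
  (∀ x ∈ Set.Icc (-1:ℝ) 1, T x ∈ Set.Icc (-1:ℝ) 1) ∧
  (∀ x ∈ Set.Ioc (0:ℝ) (1/(2*γ)),
      T x ∈ Set.Icc (-1:ℝ) 0 ∧ x = (1 + T x) ^ γ / (2*γ)) ∧
  (∀ x ∈ Set.Icc (1/(2*γ)) 1,
      T x ∈ Set.Icc (0:ℝ) 1 ∧ x = T x + (1 - T x) ^ γ / (2*γ)) ∧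
  (∀ x ∈ Set.Ico (-1:ℝ) 0, T x = - T (-x))

/-- Lebesgue measure on `[-1,1]` normalized to a probability measure. -/
def pikMeasure : Measure ℝ := (2⁻¹ : ℝ≥0∞) • (volume.restrict (Set.Icc (-1:ℝ) 1))

instance : IsProbabilityMeasure pikMeasure := by
  constructor
  rw [pikMeasure, Measure.smul_apply, Measure.restrict_apply MeasurableSet.univ,
    Set.univ_inter, Real.volume_Icc, show ((1:ℝ) - -1 = 2) by norm_num,
    ENNReal.ofReal_ofNat, smul_eq_mul]
  exact ENNReal.inv_mul_cancel (by norm_num) (by norm_num)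

/-- The sup-norm of `f` on `[-1,1]`. -/
def supIcc (f : ℝ → ℝ) : ℝ := ⨆ x : Set.Icc (-1:ℝ) 1, |f (x:ℝ)|

/-- The Lipschitz seminorm of `f` on `[-1,1]`. -/
def lipIcc (f : ℝ → ℝ) : ℝ :=
  ⨆ p : (Set.Icc (-1:ℝ) 1) × (Set.Icc (-1:ℝ) 1),
    |f (p.1:ℝ) - f (p.2:ℝ)| / |(p.1:ℝ) - (p.2:ℝ)|

/-- `‖f‖_Lip = ‖f‖_∞ + Lip(f)` on `[-1,1]`. -/
def nLipIcc (f : ℝ → ℝ) : ℝ := supIcc f + lipIcc f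

/-- `Δ_n^-`: the sets `Δ₀^- = T⁻¹(M₊) ∩ M₋` and `Δ_n^- = T⁻¹(Δ_{n-1}^-) ∩ M₋`,
where `M₋ = (-1,0)` and `M₊ = (0,1)`. -/
def DeltaM (T : ℝ → ℝ) : ℕ → Set ℝ
  | 0 => T ⁻¹' (Set.Ioo (0:ℝ) 1) ∩ Set.Ioo (-1:ℝ) 0
  | n+1 => T ⁻¹' (DeltaM T n) ∩ Set.Ioo (-1:ℝ) 0

/-- `Δ_n^+`: the sets `Δ₀^+ = T⁻¹(M₋) ∩ M₊` and `Δ_n^+ = T⁻¹(Δ_{n-1}^+) ∩ M₊`. -/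
def DeltaP (T : ℝ → ℝ) : ℕ → Set ℝ
  | 0 => T ⁻¹' (Set.Ioo (-1:ℝ) 0) ∩ Set.Ioo (0:ℝ) 1
  | n+1 => T ⁻¹' (DeltaP T n) ∩ Set.Ioo (0:ℝ) 1

/-- `δ_n^- = T⁻¹(Δ_{n-1}^+) ∩ Δ₀^-` (for `n ≥ 1`). -/
def deltaMs (T : ℝ → ℝ) (n : ℕ) : Set ℝ := T ⁻¹' (DeltaP T (n-1)) ∩ DeltaM T 0

/-- `δ_n^+ = T⁻¹(Δ_{n-1}^-) ∩ Δ₀^+` (for `n ≥ 1`). -/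
def deltaPs (T : ℝ → ℝ) (n : ℕ) : Set ℝ := T ⁻¹' (DeltaM T (n-1)) ∩ DeltaP T 0

/-- `δ_n = δ_n^- ∪ δ_n^+`. -/
def smallDelta (T : ℝ → ℝ) (n : ℕ) : Set ℝ := deltaMs T n ∪ deltaPs T n

/-- `Δ_n = Δ_n^- ∪ Δ_n^+`. -/
def bigDelta (T : ℝ → ℝ) (n : ℕ) : Set ℝ := DeltaM T n ∪ DeltaP T n

/-- The base `Y = Δ₀^- ∪ Δ₀^+` of the first-return tower. -/
def Yset (T : ℝ → ℝ) : Set ℝ := DeltaM T 0 ∪ DeltaP T 0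

/-- Lebesgue measure on `Y` normalized to a probability measure. -/
def mY (T : ℝ → ℝ) : Measure ℝ := (volume (Yset T))⁻¹ • volume.restrict (Yset T)

/-- The first return time to `Y`: `τ(x) = inf {n ≥ 1 : Tⁿ(x) ∈ Y}`. -/
def tauY (T : ℝ → ℝ) (x : ℝ) : ℕ := sInf {n : ℕ | 1 ≤ n ∧ T^[n] x ∈ Yset T}

/-- The cylinder set `C_n(ℓ₀,…,ℓ_p) = (δ_{ℓ₀} ∪ Δ_{ℓ₀}) ∩ ⋂_{j<p} T^{-ℓ_j} δ_{ℓ_{j+1}-ℓ_j}`. -/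
def cylinder (T : ℝ → ℝ) (p : ℕ) (ℓ : ℕ → ℕ) : Set ℝ :=
  (smallDelta T (ℓ 0) ∪ bigDelta T (ℓ 0)) ∩
    ⋂ j ∈ Finset.range p, T^[ℓ j] ⁻¹' (smallDelta T (ℓ (j+1) - ℓ j))

namespace PikAux

/-- the sequence `u_k = 1 - g_+^k(0)` -/
def u (γ : ℝ) : ℕ → ℝ
  | 0 => 1
  | n+1 => u γ n - (u γ n) ^ γ / (2*γ)

lemma u_bounds {γ : ℝ} (hγ : 1 < γ) (n : ℕ) : 0 < u γ n ∧ u γ n ≤ 1 := by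
  induction n with
  | zero => simp [u]
  | succ n ih =>
    obtain ⟨h0, h1⟩ := ih
    have hp : 0 < (u γ n) ^ γ := Real.rpow_pos_of_pos h0 γ
    have hle : (u γ n) ^ γ ≤ u γ n := by
      have := Real.rpow_le_rpow_of_exponent_ge h0 h1 hγ.le
      simpa using this
    have h2 : (u γ n) ^ γ / (2*γ) ≤ u γ n / 2 := by
      rw [div_le_div_iff₀ (by linarith) (by norm_num)]
      nlinarith
    have h3 : 0 < (u γ n) ^ γ / (2*γ) := by positivity
    constructor
    · simp only [u]; linarith
    · simp only [u]; linarith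

lemma u_succ {γ : ℝ} (hγ : 1 < γ) (n : ℕ) :
    u γ (n+1) = u γ n * (1 - (u γ n)^(γ-1)/(2*γ)) := by
  have h0 := (u_bounds hγ n).1
  have : (u γ n)^γ = u γ n * (u γ n)^(γ-1) := by
    rw [← Real.rpow_one_add' h0.le (by linarith)]; congr 1; ring
  simp only [u]; rw [this]; ring

lemma u_anti {γ : ℝ} (hγ : 1 < γ) (n : ℕ) : u γ (n+1) ≤ u γ n := by
  have h0 := (u_bounds hγ n).1
  have : 0 ≤ (u γ n) ^ γ / (2*γ) := by positivity
  simp only [u]; linarith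

lemma u_ratio {γ : ℝ} (hγ : 1 < γ) (n : ℕ) :
    1 - (u γ n)^(γ-1)/2 ≤ (u γ (n+1))^γ / (u γ n)^γ := by
  have h0 := (u_bounds hγ n).1
  have h1 := (u_bounds hγ (n+1)).1
  have hr : u γ (n+1) / u γ n = 1 + (-((u γ n)^(γ-1)/(2*γ))) := by
    rw [u_succ hγ]; field_simp; ring
  rw [← Real.div_rpow h1.le h0.le, hr]
  have hge : -1 ≤ -((u γ n)^(γ-1)/(2*γ)) := by
    have : 0 < u γ (n+1) / u γ n := by positivity
    linarith
  have := one_add_mul_self_le_rpow_one_add hge hγ.le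
  refine le_trans (le_of_eq ?_) this
  field_simp; ring

lemma u_growth {γ : ℝ} (hγ : 1 < γ) (n : ℕ) :
    (n:ℝ) * ((γ-1)/(2*γ)) ≤ (u γ n)^(-(γ-1)) := by
  induction n with
  | zero => simp [u]
  | succ n ih =>
    have h0 := (u_bounds hγ n).1
    have h1 := (u_bounds hγ (n+1)).1
    set t := (u γ n)^(γ-1)/(2*γ) with ht
    have hr : u γ (n+1) = u γ n * (1 - t) := u_succ hγ n
    have ht1 : 0 < 1 - t := by
      by_contra h
      push Not at h
      have := mul_nonpos_of_nonneg_of_nonpos h0.le h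
      linarith
    rw [hr, Real.mul_rpow h0.le ht1.le]
    have hb : 1 + (γ-1)*t ≤ (1-t)^(-(γ-1)) := by
      rw [Real.rpow_def_of_pos ht1]
      have h2 := Real.log_le_sub_one_of_pos ht1
      have h3 := Real.add_one_le_exp (Real.log (1-t) * (-(γ-1)))
      nlinarith
    have hup : 0 < (u γ n)^(-(γ-1)) := Real.rpow_pos_of_pos h0 _
    have hmul : (u γ n)^(-(γ-1)) * ((γ-1)*t) = (γ-1)/(2*γ) := by
      have : (u γ n)^(-(γ-1)) * (u γ n)^(γ-1) = 1 := by
        rw [← Real.rpow_add h0]; simp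
      rw [ht]
      calc _ = ((u γ n)^(-(γ-1)) * (u γ n)^(γ-1)) * ((γ-1)/(2*γ)) := by ring
        _ = _ := by rw [this, one_mul]
    have := mul_le_mul_of_nonneg_left hb hup.le
    push_cast
    nlinarith

lemma u_decay {γ : ℝ} (hγ : 1 < γ) (n : ℕ) (hn : 1 ≤ n) :
    (u γ n)^γ ≤ ((γ-1)/(2*γ))^(-(γ/(γ-1))) * (n:ℝ)^(-(γ/(γ-1))) := by
  have h0 := (u_bounds hγ n).1
  have hg1 : 0 < γ - 1 := by linarith
  have hn' : (0:ℝ) < n := by exact_mod_cast hn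
  have hc : 0 < (γ-1)/(2*γ) := by positivity
  rw [← Real.mul_rpow hc.le hn'.le]
  have h := u_growth hγ n
  have h2 := Real.rpow_le_rpow_of_nonpos (x := (γ-1)/(2*γ) * n)
    (y := (u γ n)^(-(γ-1))) (z := -(γ/(γ-1))) (by positivity)
    (by rw [mul_comm]; exact h) (by have : 0 < γ/(γ-1) := by positivity
                                    linarith)
  refine le_trans (le_of_eq ?_) h2
  rw [← Real.rpow_mul h0.le]
  congr 1; field_simp

/-- mean value bounds for powers -/
lemma pow_bounds {γ a b : ℝ} (hγ : 1 < γ) (hb : 0 ≤ b) (hab : b ≤ a) (ha : a ≤ 1) :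
    γ * b^(γ-1) * (a-b) ≤ a^γ - b^γ ∧ a^γ - b^γ ≤ γ * (a-b) := by
  have key : ∀ x y : ℝ, 0 < x → 0 ≤ y → γ * x^(γ-1) * (y-x) ≤ y^γ - x^γ := by
    intro x y hx hy
    have h := one_add_mul_self_le_rpow_one_add (s := y/x - 1) (by
      have : 0 ≤ y/x := by positivity
      linarith) hγ.le
    have e : 1 + (y/x - 1) = y/x := by ring
    rw [e, Real.div_rpow hy hx.le] at h
    have hxp : 0 < x^γ := Real.rpow_pos_of_pos hx _
    rw [le_div_iff₀ hxp] at h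
    have hs : x^γ = x * x^(γ-1) := by
      rw [← Real.rpow_one_add' hx.le (by linarith)]; congr 1; ring
    have : (1 + γ*(y/x-1)) * x^γ = x^γ + γ * x^(γ-1) * (y-x) := by
      rw [hs]; field_simp
    linarith
  rcases hb.eq_or_lt with h | h
  · subst h
    rw [Real.zero_rpow (by linarith), Real.zero_rpow (by linarith)]
    have h1 : 0 ≤ a^γ := Real.rpow_nonneg hab _
    have h2 : a^γ ≤ a := by
      rcases hab.eq_or_lt with h | h
      · rw [← h, Real.zero_rpow (by linarith)]
      · simpa using Real.rpow_le_rpow_of_exponent_ge h ha hγ.le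
    constructor
    · simpa using h1
    · nlinarith
  · have ha0 : 0 < a := by linarith
    refine ⟨key b a h ha0.le, ?_⟩
    have h1 := key a b ha0 hb
    have h2 : a^(γ-1) ≤ 1 := Real.rpow_le_one ha0.le ha (by linarith)
    have h3 : γ * a^(γ-1) * (a-b) ≤ γ * (a-b) := by
      apply mul_le_mul_of_nonneg_right _ (by linarith)
      nlinarith
    nlinarith

variable {γ : ℝ} {T : ℝ → ℝ}

lemma T_pos (hγ : 1 < γ) (hT : IsPikovsky γ T) {x : ℝ} (hx : x ∈ Set.Ioo (0:ℝ) 1)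
    (h : 0 < T x) (h' : T x < 1) :
    x = T x + (1 - T x) ^ γ / (2*γ) := by
  obtain ⟨_, h1, h2, _⟩ := hT
  rcases le_total x (1/(2*γ)) with hc | hc
  · have := (h1 x ⟨hx.1, hc⟩).1.2; linarith
  · exact (h2 x ⟨hc, hx.2.le⟩).2

lemma T_neg (hγ : 1 < γ) (hT : IsPikovsky γ T) {x : ℝ} (hx : x ∈ Set.Ioo (0:ℝ) 1)
    (h : T x < 0) : x ≤ 1/(2*γ) ∧ x = (1 + T x) ^ γ / (2*γ) := by
  obtain ⟨_, h1, h2, _⟩ := hT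
  rcases le_total x (1/(2*γ)) with hc | hc
  · exact ⟨hc, (h1 x ⟨hx.1, hc⟩).2⟩
  · have := (h2 x ⟨hc, hx.2.le⟩).1.1; linarith

lemma DeltaP_sub {n : ℕ} {x : ℝ} (h : x ∈ DeltaP T n) : x ∈ Set.Ioo (0:ℝ) 1 := by
  cases n <;> exact h.2

lemma DeltaM_sub {n : ℕ} {x : ℝ} (h : x ∈ DeltaM T n) : x ∈ Set.Ioo (-1:ℝ) 0 := by
  cases n <;> exact h.2

lemma T_odd (hT : IsPikovsky γ T) {x : ℝ} (hx : x ∈ Set.Ioo (-1:ℝ) 0) : T (-x) = - T x := by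
  rw [hT.2.2.2 x ⟨hx.1.le, hx.2⟩, neg_neg]

lemma neg_mem (hT : IsPikovsky γ T) {n : ℕ} : ∀ {x : ℝ}, x ∈ DeltaM T n → -x ∈ DeltaP T n := by
  induction n with
  | zero =>
    intro x hx
    have hx2 := hx.2
    have hx1 : T x ∈ Set.Ioo (0:ℝ) 1 := hx.1
    refine ⟨?_, ⟨by linarith [hx2.2], by linarith [hx2.1]⟩⟩
    rw [Set.mem_preimage, T_odd hT hx2]
    exact ⟨by linarith [hx1.2], by linarith [hx1.1]⟩
  | succ n ih =>
    intro x hx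
    have hx2 := hx.2
    have hx1 : T x ∈ DeltaM T n := hx.1
    refine ⟨?_, ⟨by linarith [hx2.2], by linarith [hx2.1]⟩⟩
    rw [Set.mem_preimage, T_odd hT hx2]
    exact ih hx1

/-- expansion on the positive side -/
lemma exp_pos (hγ : 1 < γ) {x y t t' v : ℝ} (hv0 : 0 ≤ v)
    (hx : x = t + (1 - t) ^ γ / (2*γ)) (hy : y = t' + (1 - t') ^ γ / (2*γ))
    (ht : 0 ≤ t) (htt : t ≤ t') (hv : t' ≤ 1 - v) :
    x ≤ y ∧ y - x ≤ (1 - v^(γ-1)/2) * (t' - t) := by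
  obtain ⟨h1, h2⟩ := pow_bounds (a := 1 - t) (b := 1 - t') hγ (by linarith) (by linarith)
    (by linarith)
  have h3 : v^(γ-1) ≤ (1-t')^(γ-1) := Real.rpow_le_rpow hv0 (by linarith) (by linarith)
  have e : y - x = (t' - t) - ((1-t)^γ - (1-t')^γ)/(2*γ) := by rw [hx, hy]; ring
  have h2' : ((1-t)^γ - (1-t')^γ)/(2*γ) ≤ (t'-t)/2 := by
    rw [div_le_div_iff₀ (by linarith) (by norm_num)]; nlinarith
  have h1' : (1-t')^(γ-1)/2 * (t'-t) ≤ ((1-t)^γ - (1-t')^γ)/(2*γ) := by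
    rw [le_div_iff₀ (by linarith)]; nlinarith
  have h4 : v^(γ-1) * (t'-t) ≤ (1-t')^(γ-1) * (t'-t) :=
    mul_le_mul_of_nonneg_right h3 (by linarith)
  constructor
  · linarith
  · rw [e]; nlinarith

lemma DeltaP_le (hγ : 1 < γ) (hT : IsPikovsky γ T) {n : ℕ} :
    ∀ {x : ℝ}, x ∈ DeltaP T n → x ≤ 1 - u γ (n+1) := by
  induction n with
  | zero =>
    intro x hx
    have hx1 : T x ∈ Set.Ioo (-1:ℝ) 0 := hx.1
    have := (T_neg hγ hT hx.2 hx1.2).1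
    simpa [u] using this
  | succ n ih =>
    intro x hx
    have hx1 : T x ∈ DeltaP T n := hx.1
    have hs := DeltaP_sub hx1
    have hle := ih hx1
    have h := T_pos hγ hT hx.2 hs.1 hs.2
    have h2 := (exp_pos hγ (v := u γ (n+1)) (u_bounds hγ (n+1)).1.le h rfl hs.1.le hle le_rfl).1
    refine h2.trans (le_of_eq ?_)
    simp only [u, sub_sub_cancel]; ring

lemma stepP (hγ : 1 < γ) (hT : IsPikovsky γ T) {n : ℕ} {x y : ℝ}
    (hx : x ∈ DeltaP T (n+1)) (hy : y ∈ DeltaP T (n+1)) :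
    |x - y| ≤ (u γ (n+2))^γ / (u γ (n+1))^γ * |T x - T y| := by
  wlog h : T x ≤ T y generalizing x y
  · have := this hy hx (le_of_not_ge h)
    rwa [abs_sub_comm, abs_sub_comm (T x)]
  have hx1 : T x ∈ DeltaP T n := hx.1
  have hy1 : T y ∈ DeltaP T n := hy.1
  have hsx := DeltaP_sub hx1
  have hsy := DeltaP_sub hy1
  obtain ⟨h1, h2⟩ := exp_pos hγ (v := u γ (n+1)) (u_bounds hγ (n+1)).1.le
    (T_pos hγ hT hx.2 hsx.1 hsx.2) (T_pos hγ hT hy.2 hsy.1 hsy.2) hsx.1.le h (DeltaP_le hγ hT hy1)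
  rw [abs_sub_comm, abs_of_nonneg (by linarith), abs_sub_comm, abs_of_nonneg (by linarith)]
  exact h2.trans (mul_le_mul_of_nonneg_right (u_ratio hγ (n+1)) (by linarith))

lemma step0P (hγ : 1 < γ) (hT : IsPikovsky γ T) {x y : ℝ}
    (hx : x ∈ DeltaP T 0) (hy : y ∈ DeltaP T 0) :
    |x - y| ≤ 1/2 * |T x - T y| := by
  wlog h : T x ≤ T y generalizing x y
  · have := this hy hx (le_of_not_ge h)
    rwa [abs_sub_comm, abs_sub_comm (T x)]
  have hx1 : T x ∈ Set.Ioo (-1:ℝ) 0 := hx.1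
  have hy1 : T y ∈ Set.Ioo (-1:ℝ) 0 := hy.1
  have ex := (T_neg hγ hT hx.2 hx1.2).2
  have ey := (T_neg hγ hT hy.2 hy1.2).2
  have hb := (pow_bounds (a := 1 + T y) (b := 1 + T x) hγ (by linarith [hx1.1]) (by linarith)
    (by linarith [hy1.2])).2
  have hm : (1 + T x)^γ ≤ (1+T y)^γ := Real.rpow_le_rpow (by linarith [hx1.1]) (by linarith)
    (by linarith)
  have e : y - x = ((1+T y)^γ - (1+T x)^γ)/(2*γ) := by
    rw [sub_div, ← ex, ← ey]
  have h0 : 0 ≤ y - x := by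
    rw [e]; exact div_nonneg (by linarith) (by linarith)
  rw [abs_sub_comm, abs_of_nonneg h0, abs_sub_comm, abs_of_nonneg (by linarith), e,
    div_le_iff₀ (by linarith)]
  nlinarith

/-- both points in the same component of `Δ_n` -/
def BB (T : ℝ → ℝ) (n : ℕ) (x y : ℝ) : Prop :=
  (x ∈ DeltaM T n ∧ y ∈ DeltaM T n) ∨ (x ∈ DeltaP T n ∧ y ∈ DeltaP T n)

/-- both points in the same component of `δ_n` -/
def bb (T : ℝ → ℝ) (n : ℕ) (x y : ℝ) : Prop :=
  (x ∈ deltaMs T n ∧ y ∈ deltaMs T n) ∨ (x ∈ deltaPs T n ∧ y ∈ deltaPs T n)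

lemma BB_step (hγ : 1 < γ) (hT : IsPikovsky γ T) {n : ℕ} {x y : ℝ} (h : BB T (n+1) x y) :
    BB T n (T x) (T y) ∧ |x - y| ≤ (u γ (n+2))^γ / (u γ (n+1))^γ * |T x - T y| := by
  rcases h with ⟨hx, hy⟩ | ⟨hx, hy⟩
  · refine ⟨Or.inl ⟨hx.1, hy.1⟩, ?_⟩
    have := stepP hγ hT (neg_mem hT hx) (neg_mem hT hy)
    rw [T_odd hT hx.2, T_odd hT hy.2] at this
    rw [abs_sub_comm x, abs_sub_comm (T x)]
    convert this using 2
    · ring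
    · congr 1; ring
  · exact ⟨Or.inr ⟨hx.1, hy.1⟩, stepP hγ hT hx hy⟩

lemma BB0_step (hγ : 1 < γ) (hT : IsPikovsky γ T) {x y : ℝ} (h : BB T 0 x y) :
    |x - y| ≤ 1/2 * |T x - T y| := by
  rcases h with ⟨hx, hy⟩ | ⟨hx, hy⟩
  · have := step0P hγ hT (neg_mem hT hx) (neg_mem hT hy)
    rw [T_odd hT hx.2, T_odd hT hy.2] at this
    rw [abs_sub_comm x, abs_sub_comm (T x)]
    convert this using 2
    · ring
    · congr 1; ring
  · exact step0P hγ hT hx hy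

lemma bb_step (hγ : 1 < γ) (hT : IsPikovsky γ T) {n : ℕ} {x y : ℝ} (h : bb T n x y) :
    BB T (n-1) (T x) (T y) ∧ |x - y| ≤ 1/2 * |T x - T y| := by
  rcases h with ⟨hx, hy⟩ | ⟨hx, hy⟩
  · exact ⟨Or.inr ⟨hx.1, hy.1⟩, BB0_step hγ hT (Or.inl ⟨hx.2, hy.2⟩)⟩
  · exact ⟨Or.inl ⟨hx.1, hy.1⟩, BB0_step hγ hT (Or.inr ⟨hx.2, hy.2⟩)⟩

lemma BB_iter (hγ : 1 < γ) (hT : IsPikovsky γ T) (n : ℕ) : ∀ {x y : ℝ}, BB T n x y →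
    BB T 0 (T^[n] x) (T^[n] y) ∧
      |x - y| ≤ (u γ (n+1))^γ / (u γ 1)^γ * |T^[n] x - T^[n] y| := by
  induction n with
  | zero =>
    intro x y h
    refine ⟨h, ?_⟩
    have : 0 < (u γ 1)^γ := Real.rpow_pos_of_pos (u_bounds hγ 1).1 _
    simp [div_self this.ne']
  | succ n ih =>
    intro x y h
    obtain ⟨h1, h2⟩ := BB_step hγ hT h
    obtain ⟨h3, h4⟩ := ih h1
    refine ⟨h3, ?_⟩
    have p1 : 0 < (u γ 1)^γ := Real.rpow_pos_of_pos (u_bounds hγ 1).1 _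
    have p2 : 0 < (u γ (n+1))^γ := Real.rpow_pos_of_pos (u_bounds hγ _).1 _
    have p3 : 0 < (u γ (n+2))^γ := Real.rpow_pos_of_pos (u_bounds hγ _).1 _
    calc |x - y| ≤ (u γ (n+2))^γ / (u γ (n+1))^γ * |T x - T y| := h2
      _ ≤ (u γ (n+2))^γ / (u γ (n+1))^γ *
          ((u γ (n+1))^γ / (u γ 1)^γ * |T^[n] (T x) - T^[n] (T y)|) :=
        mul_le_mul_of_nonneg_left h4 (by positivity)
      _ = _ := by
        rw [Function.iterate_succ_apply, Function.iterate_succ_apply]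
        field_simp

lemma BB_le_one {n : ℕ} {x y : ℝ} (h : BB T n x y) : |x - y| ≤ 1 := by
  rcases h with ⟨hx, hy⟩ | ⟨hx, hy⟩
  · have := DeltaM_sub hx; have := DeltaM_sub hy
    simp only [Set.mem_Ioo] at *
    rw [abs_le]; constructor <;> linarith
  · have := DeltaP_sub hx; have := DeltaP_sub hy
    simp only [Set.mem_Ioo] at *
    rw [abs_le]; constructor <;> linarith

/-- the decay constant -/
def KK (γ : ℝ) : ℝ := ((γ-1)/(2*γ))^(-(γ/(γ-1))) / (u γ 1)^γ

lemma KK_pos (hγ : 1 < γ) : 0 < KK γ := by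
  have p1 : 0 < (u γ 1)^γ := Real.rpow_pos_of_pos (u_bounds hγ 1).1 _
  have : 0 < (γ-1)/(2*γ) := div_pos (by linarith) (by linarith)
  unfold KK
  have := Real.rpow_pos_of_pos this (-(γ/(γ-1)))
  positivity

lemma kap_le (hγ : 1 < γ) {a : ℕ} (ha : 1 ≤ a) :
    (u γ a)^γ / (u γ 1)^γ ≤ KK γ * (a:ℝ)^(-(γ/(γ-1))) := by
  have p1 : 0 < (u γ 1)^γ := Real.rpow_pos_of_pos (u_bounds hγ 1).1 _
  rw [KK, div_mul_eq_mul_div]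
  gcongr
  exact u_decay hγ a ha

lemma kap_le_one (hγ : 1 < γ) {a : ℕ} (ha : 1 ≤ a) :
    (u γ a)^γ / (u γ 1)^γ ≤ 1 := by
  have p1 : 0 < (u γ 1)^γ := Real.rpow_pos_of_pos (u_bounds hγ 1).1 _
  rw [div_le_one p1]
  exact Real.rpow_le_rpow (u_bounds hγ a).1.le
    (antitone_nat_of_succ_le (u_anti hγ) ha) (by linarith)

lemma kap_anti (hγ : 1 < γ) (a : ℕ) :
    (u γ (a+1))^γ / (u γ 1)^γ ≤ (u γ a)^γ / (u γ 1)^γ := by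
  have p1 : 0 < (u γ 1)^γ := Real.rpow_pos_of_pos (u_bounds hγ 1).1 _
  gcongr
  · exact (u_bounds hγ _).1.le
  · exact u_anti hγ a

lemma bb_iter (hγ : 1 < γ) (hT : IsPikovsky γ T) {a : ℕ} (ha : 1 ≤ a) {x y : ℝ}
    (h : bb T a x y) :
    BB T 0 (T^[a] x) (T^[a] y) ∧
      |x - y| ≤ 1/2 * |T^[a] x - T^[a] y| ∧
      |x - y| ≤ KK γ * (a:ℝ)^(-(γ/(γ-1))) * |T^[a] x - T^[a] y| := by
  obtain ⟨h1, h2⟩ := bb_step hγ hT h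
  obtain ⟨b, rfl⟩ : ∃ b, a = b + 1 := ⟨a-1, by omega⟩
  obtain ⟨h3, h4⟩ := BB_iter hγ hT b (by simpa using h1)
  simp only [Function.iterate_succ_apply]
  refine ⟨h3, ?_, ?_⟩
  · have := mul_le_mul_of_nonneg_right (kap_le_one hγ ha) (abs_nonneg (T^[b] (T x) - T^[b] (T y)))
    linarith
  · have := mul_le_mul_of_nonneg_right (kap_le hγ ha) (abs_nonneg (T^[b] (T x) - T^[b] (T y)))
    have := abs_nonneg (T x - T y)
    linarith

lemma BB_iter' (hγ : 1 < γ) (hT : IsPikovsky γ T) {a : ℕ} (ha : 1 ≤ a) {x y : ℝ}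
    (h : BB T a x y) :
    BB T 0 (T^[a] x) (T^[a] y) ∧
      |x - y| ≤ |T^[a] x - T^[a] y| ∧
      |x - y| ≤ KK γ * (a:ℝ)^(-(γ/(γ-1))) * |T^[a] x - T^[a] y| := by
  obtain ⟨h3, h4⟩ := BB_iter hγ hT a h
  have h5 := mul_le_mul_of_nonneg_right (kap_anti hγ a) (abs_nonneg (T^[a] x - T^[a] y))
  refine ⟨h3, ?_, ?_⟩
  · have := mul_le_mul_of_nonneg_right (kap_le_one hγ ha) (abs_nonneg (T^[a] x - T^[a] y))
    linarith
  · have := mul_le_mul_of_nonneg_right (kap_le hγ ha) (abs_nonneg (T^[a] x - T^[a] y))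
    linarith

lemma bb_of_BB0 {b : ℕ} {x y : ℝ} (h : BB T 0 x y) (hx : x ∈ smallDelta T b)
    (hy : y ∈ smallDelta T b) : bb T b x y := by
  have hM : ∀ {z}, z ∈ DeltaM T 0 → z ∈ smallDelta T b → z ∈ deltaMs T b := by
    intro z h1 h2
    rcases h2 with h2 | h2
    · exact h2
    · have := DeltaM_sub h1; have := DeltaP_sub h2.2
      simp only [Set.mem_Ioo] at *; linarith
  have hP : ∀ {z}, z ∈ DeltaP T 0 → z ∈ smallDelta T b → z ∈ deltaPs T b := by
    intro z h1 h2
    rcases h2 with h2 | h2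
    · have := DeltaP_sub h1; have := DeltaM_sub h2.2
      simp only [Set.mem_Ioo] at *; linarith
    · exact h2
  rcases h with h | h
  · exact Or.inl ⟨hM h.1 hx, hM h.2 hy⟩
  · exact Or.inr ⟨hP h.1 hx, hP h.2 hy⟩

/-- the induction constant -/
lemma chain (hγ : 1 < γ) (hT : IsPikovsky γ T) :
    ∃ C : ℝ, KK γ ≤ C ∧ ∀ (p : ℕ) (l : ℕ → ℕ), (∀ j < p, l j < l (j+1)) →
      ∀ x y : ℝ, (∀ j < p, T^[l j] x ∈ smallDelta T (l (j+1) - l j)) →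
      (∀ j < p, T^[l j] y ∈ smallDelta T (l (j+1) - l j)) →
      ∀ k i, i + k + 1 = p → BB T 0 (T^[l i] x) (T^[l i] y) →
        l i < l p ∧
        |T^[l i] x - T^[l i] y| ≤ C * ((l p - l i : ℕ) : ℝ)^(-(γ/(γ-1))) := by
  set s := γ/(γ-1) with hs
  have hs0 : 0 < s := div_pos (by linarith) (by linarith)
  have hK := KK_pos hγ
  set q : ℝ := (2:ℝ)^(-(1/s)) with hq
  have hq0 : 0 < q := Real.rpow_pos_of_pos (by norm_num) _
  have hq1 : q < 1 := Real.rpow_lt_one_of_one_lt_of_neg (by norm_num)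
    (by have : 0 < 1/s := by positivity
        linarith)
  have hqs : q^(-s) = 2 := by
    rw [hq, ← Real.rpow_mul (by norm_num)]
    have : -(1/s) * -s = 1 := by field_simp
    rw [this, Real.rpow_one]
  have he1 : 1 ≤ (1-q)^(-s) := Real.one_le_rpow_of_pos_of_le_one_of_nonpos (by linarith)
    (by linarith) (by linarith)
  refine ⟨KK γ * (1-q)^(-s), by nlinarith, ?_⟩
  intro p l hl x y hx hy k
  set C := KK γ * (1-q)^(-s) with hC
  have hCK : KK γ ≤ C := by nlinarith
  induction k with
  | zero =>
    intro i hi h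
    have hp : p = i + 1 := by omega
    subst hp
    have hlt := hl i (by omega)
    have hb := bb_of_BB0 h (hx i (by omega)) (hy i (by omega))
    obtain ⟨h1, h2, h3⟩ := bb_iter hγ hT (by omega) hb
    refine ⟨hlt, h3.trans ?_⟩
    have h4 := BB_le_one h1
    have h5 : 0 ≤ ((l (i+1) - l i : ℕ) : ℝ)^(-s) := by positivity
    calc _ ≤ KK γ * ((l (i+1) - l i : ℕ) : ℝ)^(-s) * 1 :=
          mul_le_mul_of_nonneg_left h4 (by positivity)
      _ ≤ _ := by rw [mul_one]; exact mul_le_mul_of_nonneg_right hCK h5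
  | succ k ih =>
    intro i hi h
    have hlt := hl i (by omega)
    have hb := bb_of_BB0 h (hx i (by omega)) (hy i (by omega))
    obtain ⟨h1, h2, h3⟩ := bb_iter hγ hT (by omega) hb
    have h4 := BB_le_one h1
    have hit : ∀ z, T^[l (i+1) - l i] (T^[l i] z) = T^[l (i+1)] z := by
      intro z
      rw [← Function.iterate_add_apply]; congr 1; congr 1; omega
    rw [hit, hit] at h1 h2 h3 h4
    obtain ⟨h5, h6⟩ := ih (i+1) (by omega) h1
    refine ⟨by omega, ?_⟩
    obtain ⟨a, ha⟩ : ∃ a, a = l (i+1) - l i := ⟨_, rfl⟩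
    obtain ⟨N, hN⟩ : ∃ N, N = l p - l i := ⟨_, rfl⟩
    obtain ⟨b, hb'⟩ : ∃ b, b = l p - l (i+1) := ⟨_, rfl⟩
    have hNab : N = a + b := by omega
    have ha1 : 1 ≤ a := by omega
    have hb1 : 1 ≤ b := by omega
    rw [← ha] at h3
    rw [← hb'] at h6
    rw [← hN]
    have haR : (1:ℝ) ≤ a := by exact_mod_cast ha1
    have hbR : (1:ℝ) ≤ b := by exact_mod_cast hb1
    have hNR : (N:ℝ) = a + b := by exact_mod_cast hNab
    rcases le_total ((1-q)*(N:ℝ)) a with hc | hc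
    · have h7 : (a:ℝ)^(-s) ≤ ((1-q)*(N:ℝ))^(-s) :=
        Real.rpow_le_rpow_of_nonpos (mul_pos (by linarith) (by linarith)) hc (by linarith)
      rw [Real.mul_rpow (by linarith) (by linarith)] at h7
      calc _ ≤ KK γ * (a:ℝ)^(-s) * 1 := h3.trans (mul_le_mul_of_nonneg_left h4 (by positivity))
        _ ≤ KK γ * ((1-q)^(-s) * (N:ℝ)^(-s)) := by
          rw [mul_one]; exact mul_le_mul_of_nonneg_left h7 hK.le
        _ = _ := by rw [hC]; ring
    · have h7 : (b:ℝ)^(-s) ≤ (q*(N:ℝ))^(-s) :=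
        Real.rpow_le_rpow_of_nonpos (mul_pos hq0 (by linarith)) (by linarith) (by linarith)
      rw [Real.mul_rpow hq0.le (by linarith), hqs] at h7
      have h8 := mul_le_mul_of_nonneg_left h7 (hK.le.trans hCK)
      linarith

lemma mem_iter {b : ℕ} : ∀ {a : ℕ} {z : ℝ}, b < a → z ∈ smallDelta T a ∪ bigDelta T a →
    T^[b] z ∈ smallDelta T (a-b) ∪ bigDelta T (a-b) := by
  induction b with
  | zero => intro a z _ h; simpa using h
  | succ b ih =>
    intro a z hab h
    obtain ⟨c, rfl⟩ : ∃ c, a = c + 1 := ⟨a-1, by omega⟩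
    rw [Function.iterate_succ_apply, Nat.add_sub_add_right]
    apply ih (by omega)
    right
    rcases h with (h | h) | (h | h)
    · exact Or.inr h.1
    · exact Or.inl h.1
    · exact Or.inl h.1
    · exact Or.inr h.1

lemma vol_le {S : Set ℝ} {D : ℝ} (h : ∀ x ∈ S, ∀ y ∈ S, |x - y| ≤ D) :
    volume S ≤ ENNReal.ofReal D := by
  refine (Real.volume_le_diam S).trans (Metric.ediam_le ?_)
  intro x hx y hy
  rw [edist_dist, Real.dist_eq]
  exact ENNReal.ofReal_le_ofReal (h x hx y hy)

end PikAux

/-- Proposition 5.7 of the paper: for `γ > 1` and the Pikovsky map `T` with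
parameter `γ` there is a constant `C_γ > 0` depending only on `γ` such that for every `n ≥ 1`,
every admissible tuple `(ℓ₀,…,ℓ_p)` and every `0 ≤ ℓ < n`,
`λ(T^ℓ(C_n(ℓ₀,…,ℓ_p))) ≤ C_γ (n−ℓ)^{−γ/(γ−1)}`. -/
theorem pikovsky_cylinder_image_estimate (γ : ℝ) (hγ : 1 < γ) (T : ℝ → ℝ)
    (hT : IsPikovsky γ T) :
    ∃ Cγ : ℝ, 0 < Cγ ∧
      ∀ n : ℕ, 1 ≤ n → ∀ (p : ℕ) (ℓseq : ℕ → ℕ),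
        1 ≤ ℓseq 0 → (∀ j < p, ℓseq j < ℓseq (j+1)) →
        (p = 0 → n < ℓseq 0) → (0 < p → ℓseq (p-1) ≤ n ∧ n < ℓseq p) →
        ∀ ℓ : ℕ, ℓ < n →
          pikMeasure (T^[ℓ] '' cylinder T p ℓseq)
            ≤ ENNReal.ofReal (Cγ * (((n - ℓ : ℕ) : ℝ) ^ (-(γ / (γ - 1))))) := by
  obtain ⟨C, hKC, hC⟩ := PikAux.chain hγ hT
  have hK := PikAux.KK_pos hγ
  have hC0 : 0 < C := lt_of_lt_of_le hK hKC
  have hs0 : 0 < γ/(γ-1) := div_pos (by linarith) (by linarith)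
  set s := γ/(γ-1) with hs
  have h2s : 0 < (2:ℝ)^s := Real.rpow_pos_of_pos (by norm_num) _
  have h2s1 : 1 ≤ (2:ℝ)^s := Real.one_le_rpow (by norm_num) hs0.le
  refine ⟨4 * (C * 2^s), by positivity, ?_⟩
  intro n hn p l hl0 hl hp0 hp1 m hm
  have hnp : n < l p := by
    rcases Nat.eq_zero_or_pos p with h | h
    · subst h; exact hp0 rfl
    · exact (hp1 h).2
  have hex : ∃ j, m < l j := ⟨p, by omega⟩
  obtain ⟨j, hj, hjmin⟩ : ∃ j, m < l j ∧ ∀ i < j, l i ≤ m := by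
    classical
    exact ⟨Nat.find hex, Nat.find_spec hex, fun i hi => by
      have := Nat.find_min hex hi; omega⟩
  have hjp : j ≤ p := by
    by_contra h
    have := hjmin p (by omega); omega
  -- distance estimate for points of the image in a common component
  set D : ℝ := C * 2^s * ((n - m : ℕ):ℝ)^(-s) with hD
  have hcyl : ∀ x ∈ cylinder T p l, ∀ i < p, T^[l i] x ∈ smallDelta T (l (i+1) - l i) := by
    intro x hx i hi
    have := Set.mem_iInter₂.1 hx.2 i (Finset.mem_range.2 hi)
    exact this
  have hit : ∀ z, T^[l j - m] (T^[m] z) = T^[l j] z := by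
    intro z
    rw [← Function.iterate_add_apply]; congr 1; congr 1; omega
  have hNn : ((n - m : ℕ):ℝ) ≤ ((l p - m : ℕ):ℝ) := by
    exact_mod_cast (by omega : n - m ≤ l p - m)
  have hnm : (0:ℝ) < ((n-m : ℕ):ℝ) := by exact_mod_cast (by omega : 0 < n - m)
  have hNle : ((l p - m : ℕ):ℝ)^(-s) ≤ ((n - m : ℕ):ℝ)^(-s) :=
    Real.rpow_le_rpow_of_nonpos hnm hNn (by linarith)
  have h2inv : (1/2:ℝ)^(-s) = 2^s := by
    rw [one_div, Real.inv_rpow (by norm_num), Real.rpow_neg (by norm_num), inv_inv]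
  have main : ∀ x ∈ cylinder T p l, ∀ y ∈ cylinder T p l,
      (PikAux.BB T 0 (T^[l j] x) (T^[l j] y) ∧
      |T^[m] x - T^[m] y| ≤ |T^[l j] x - T^[l j] y| ∧
      |T^[m] x - T^[m] y| ≤ PikAux.KK γ * ((l j - m : ℕ):ℝ)^(-s) * |T^[l j] x - T^[l j] y|) →
      |T^[m] x - T^[m] y| ≤ D := by
    rintro x hx y hy ⟨h1, h2, h3⟩
    have h4 := PikAux.BB_le_one h1
    have h3' : |T^[m] x - T^[m] y| ≤ PikAux.KK γ * ((l j - m : ℕ):ℝ)^(-s) := by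
      refine h3.trans ?_
      have : 0 ≤ PikAux.KK γ * ((l j - m : ℕ):ℝ)^(-s) := by positivity
      nlinarith
    suffices hsuf : |T^[m] x - T^[m] y| ≤ C * 2^s * ((l p - m : ℕ):ℝ)^(-s) from
      hsuf.trans (mul_le_mul_of_nonneg_left hNle (by positivity))
    have hN0 : (0:ℝ) < ((l p - m : ℕ):ℝ) := by linarith
    have hhalf : ∀ a : ℝ, 1/2 * ((l p - m : ℕ):ℝ) ≤ a →
        a^(-s) ≤ 2^s * ((l p - m : ℕ):ℝ)^(-s) := by
      intro a ha
      have := Real.rpow_le_rpow_of_nonpos (z := -s) (by positivity) ha (by linarith)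
      rwa [Real.mul_rpow (by norm_num) hN0.le, h2inv] at this
    have hK' : 1/2 * ((l p - m : ℕ):ℝ) ≤ ((l j - m : ℕ):ℝ) →
        |T^[m] x - T^[m] y| ≤ C * 2^s * ((l p - m : ℕ):ℝ)^(-s) := by
      intro ha
      calc _ ≤ PikAux.KK γ * ((l j - m : ℕ):ℝ)^(-s) := h3'
        _ ≤ C * (2^s * ((l p - m : ℕ):ℝ)^(-s)) :=
          mul_le_mul hKC (hhalf _ ha) (by positivity) hC0.le
        _ = _ := by ring
    rcases hjp.eq_or_lt with hjp' | hjp'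
    · apply hK'
      rw [hjp']; linarith
    · obtain ⟨h5, h6⟩ := hC p l hl x y (hcyl x hx) (hcyl y hy) (p - j - 1) j (by omega) h1
      have hsum : ((l p - m : ℕ):ℝ) = ((l j - m : ℕ):ℝ) + ((l p - l j : ℕ):ℝ) := by
        exact_mod_cast (by omega : l p - m = (l j - m) + (l p - l j))
      rcases le_total (1/2 * ((l p - m : ℕ):ℝ)) ((l j - m : ℕ):ℝ) with hc | hc
      · exact hK' hc
      · have := hhalf ((l p - l j : ℕ):ℝ) (by linarith)
        calc _ ≤ C * ((l p - l j : ℕ):ℝ)^(-s) := h2.trans h6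
          _ ≤ C * (2^s * ((l p - m : ℕ):ℝ)^(-s)) := mul_le_mul_of_nonneg_left this hC0.le
          _ = _ := by ring
  have mainBB : ∀ x ∈ cylinder T p l, ∀ y ∈ cylinder T p l,
      PikAux.BB T (l j - m) (T^[m] x) (T^[m] y) → |T^[m] x - T^[m] y| ≤ D := by
    intro x hx y hy h
    have := PikAux.BB_iter' hγ hT (by omega) h
    rw [hit, hit] at this
    exact main x hx y hy this
  have mainbb : ∀ x ∈ cylinder T p l, ∀ y ∈ cylinder T p l,
      PikAux.bb T (l j - m) (T^[m] x) (T^[m] y) → |T^[m] x - T^[m] y| ≤ D := by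
    intro x hx y hy h
    obtain ⟨a1, a2, a3⟩ := PikAux.bb_iter hγ hT (by omega) h
    rw [hit, hit] at a1 a2 a3
    exact main x hx y hy ⟨a1, by linarith [abs_nonneg (T^[l j] x - T^[l j] y)], a3⟩
  have hmem : ∀ x ∈ cylinder T p l,
      T^[m] x ∈ smallDelta T (l j - m) ∪ bigDelta T (l j - m) := by
    intro x hx
    rcases Nat.eq_zero_or_pos j with h | h
    · subst h
      exact PikAux.mem_iter hj hx.1
    · obtain ⟨i, rfl⟩ : ∃ i, j = i + 1 := ⟨j-1, by omega⟩
      have hi := hjmin i (by omega)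
      have h1 := hcyl x hx i (by omega)
      have h2 := PikAux.mem_iter (b := m - l i) (by omega) (Or.inl h1)
      rw [← Function.iterate_add_apply] at h2
      have e1 : m - l i + l i = m := by omega
      have e2 : l (i+1) - l i - (m - l i) = l (i+1) - m := by omega
      rwa [e1, e2] at h2
  set I := T^[m] '' cylinder T p l with hI
  set A := l j - m with hA
  have hsub : I ⊆ ((I ∩ deltaMs T A) ∪ (I ∩ deltaPs T A)) ∪
      ((I ∩ DeltaM T A) ∪ (I ∩ DeltaP T A)) := by
    rintro z hz
    have hz' := hz
    obtain ⟨x, hx, rfl⟩ := hz'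
    rcases hmem x hx with (h | h) | (h | h)
    · exact Or.inl (Or.inl ⟨hz, h⟩)
    · exact Or.inl (Or.inr ⟨hz, h⟩)
    · exact Or.inr (Or.inl ⟨hz, h⟩)
    · exact Or.inr (Or.inr ⟨hz, h⟩)
  have v1 : volume (I ∩ deltaMs T A) ≤ ENNReal.ofReal D := PikAux.vol_le (by
    rintro _ ⟨⟨x, hx, rfl⟩, h1⟩ _ ⟨⟨y, hy, rfl⟩, h2⟩
    exact mainbb x hx y hy (Or.inl ⟨h1, h2⟩))
  have v2 : volume (I ∩ deltaPs T A) ≤ ENNReal.ofReal D := PikAux.vol_le (by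
    rintro _ ⟨⟨x, hx, rfl⟩, h1⟩ _ ⟨⟨y, hy, rfl⟩, h2⟩
    exact mainbb x hx y hy (Or.inr ⟨h1, h2⟩))
  have v3 : volume (I ∩ DeltaM T A) ≤ ENNReal.ofReal D := PikAux.vol_le (by
    rintro _ ⟨⟨x, hx, rfl⟩, h1⟩ _ ⟨⟨y, hy, rfl⟩, h2⟩
    exact mainBB x hx y hy (Or.inl ⟨h1, h2⟩))
  have v4 : volume (I ∩ DeltaP T A) ≤ ENNReal.ofReal D := PikAux.vol_le (by
    rintro _ ⟨⟨x, hx, rfl⟩, h1⟩ _ ⟨⟨y, hy, rfl⟩, h2⟩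
    exact mainBB x hx y hy (Or.inr ⟨h1, h2⟩))
  have hD0 : 0 ≤ D := by positivity
  have hvol : volume I ≤ ENNReal.ofReal (4 * D) := by
    calc volume I ≤ (ENNReal.ofReal D + ENNReal.ofReal D) +
          (ENNReal.ofReal D + ENNReal.ofReal D) :=
        (measure_mono hsub).trans ((measure_union_le _ _).trans (add_le_add
          ((measure_union_le _ _).trans (add_le_add v1 v2))
          ((measure_union_le _ _).trans (add_le_add v3 v4))))
      _ = ENNReal.ofReal (4 * D) := by
        rw [← ENNReal.ofReal_add hD0 hD0, ← ENNReal.ofReal_add (by positivity) (by positivity)]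
        congr 1; ring
  have hpik : pikMeasure I ≤ volume I := by
    rw [pikMeasure, Measure.smul_apply, smul_eq_mul]
    calc _ ≤ 1 * volume I := mul_le_mul' (by simp) (Measure.restrict_apply_le _ _)
      _ = _ := one_mul _
  refine (hpik.trans hvol).trans (le_of_eq ?_)
  congr 1
  rw [hD]; ring

end
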